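/- arXiv:2605.20935 — 5 statements merged into one kernel-verified Lean document; each statement's English description precedes it below -/
import Mathlib

section
/- Let k ≥ 1 and let P : ℂ^k → ℂ^k be a map each of whose components is the evaluation of a multivariate polynomial in k variables over ℂ. Suppose there exist a constant C ≥ 0 and a real number α < 2 such that log⁺‖P(z)‖ ≤ α·log⁺‖z‖ + C for all z ∈ ℂ^k. Then every component of P has total degree at most 1; in other words, P is an affine map, i.e. of the form P(z) = A z + b with A a ℂ-linear endomorphism of ℂ^k and b ∈ ℂ^k. -/
open Filter Topology

lemma aux_eval_smul {k : ℕ} {h : MvPolynomial (Fin k) ℂ} {n : ℕ} (hh : h.IsHomogeneous n)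
    (t : ℂ) (w : Fin k → ℂ) :
    MvPolynomial.eval (fun j => t * w j) h = t ^ n * MvPolynomial.eval w h := by
  rw [MvPolynomial.eval_eq, MvPolynomial.eval_eq, Finset.mul_sum]
  refine Finset.sum_congr rfl fun d hd => ?_
  have h1 : d.degree = n := by
    have := hh (MvPolynomial.mem_support_iff.1 hd)
    rw [Finsupp.degree_eq_weight_one]
    exact this
  have h2 : ∑ i ∈ d.support, d i = n := h1
  simp only [mul_pow, Finset.prod_mul_distrib, Finset.prod_pow_eq_pow_sum, h2]
  ring

lemma aux_top_ne {k : ℕ} (p : MvPolynomial (Fin k) ℂ) (hp : p ≠ 0) :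
    MvPolynomial.homogeneousComponent p.totalDegree p ≠ 0 := by
  intro h0
  obtain ⟨d, hd, hd2⟩ := Finset.exists_mem_eq_sup p.support
    (MvPolynomial.support_nonempty.2 hp) (fun s => s.sum fun _ e => e)
  have h1 : d.degree = p.totalDegree := hd2.symm
  have := congrArg (MvPolynomial.coeff d) h0
  rw [MvPolynomial.coeff_homogeneousComponent, if_pos h1] at this
  exact MvPolynomial.mem_support_iff.1 hd (by simpa using this)

lemma aux_tendsto {k : ℕ} (p : MvPolynomial (Fin k) ℂ) (w : Fin k → ℂ) :
    Tendsto (fun t : ℝ => MvPolynomial.eval (fun j => (t : ℂ) * w j) p / (t : ℂ) ^ p.totalDegree)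
      atTop (𝓝 (MvPolynomial.eval w (MvPolynomial.homogeneousComponent p.totalDegree p))) := by
  have h1 : ∀ t : ℝ, MvPolynomial.eval (fun j => (t : ℂ) * w j) p / (t : ℂ) ^ p.totalDegree
      = ∑ n ∈ Finset.range (p.totalDegree + 1),
        ((t ^ n / t ^ p.totalDegree : ℝ) : ℂ)
          * MvPolynomial.eval w (MvPolynomial.homogeneousComponent n p) := by
    intro t
    have h0 := congrArg (MvPolynomial.eval (fun j => (t : ℂ) * w j))
      (MvPolynomial.sum_homogeneousComponent p)
    rw [← h0, map_sum, Finset.sum_div]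
    refine Finset.sum_congr rfl fun n _ => ?_
    rw [aux_eval_smul (MvPolynomial.homogeneousComponent_isHomogeneous n p)]
    push_cast
    ring
  simp_rw [h1, Finset.sum_range_succ]
  have h2 : Tendsto (fun t : ℝ => ∑ n ∈ Finset.range p.totalDegree,
        ((t ^ n / t ^ p.totalDegree : ℝ) : ℂ)
          * MvPolynomial.eval w (MvPolynomial.homogeneousComponent n p)) atTop
        (𝓝 (∑ n ∈ Finset.range p.totalDegree, ((0 : ℝ) : ℂ)
          * MvPolynomial.eval w (MvPolynomial.homogeneousComponent n p))) := by
    refine tendsto_finsetSum _ fun n hn => ?_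
    refine Tendsto.mul_const _ ?_
    exact (Complex.continuous_ofReal.tendsto 0).comp
      (tendsto_pow_div_pow_atTop_zero (Finset.mem_range.1 hn))
  have h3 : Tendsto (fun t : ℝ => ((t ^ p.totalDegree / t ^ p.totalDegree : ℝ) : ℂ)
          * MvPolynomial.eval w (MvPolynomial.homogeneousComponent p.totalDegree p)) atTop
        (𝓝 (MvPolynomial.eval w (MvPolynomial.homogeneousComponent p.totalDegree p))) := by
    refine tendsto_const_nhds.congr' ?_
    filter_upwards [eventually_gt_atTop 0] with t ht
    rw [div_self (pow_pos ht _).ne']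
    simp
  simpa using h2.add h3

lemma aux_affine {k : ℕ} (p : MvPolynomial (Fin k) ℂ) (hp : p.totalDegree ≤ 1) :
    ∃ (L : EuclideanSpace ℂ (Fin k) →ₗ[ℂ] ℂ) (b : ℂ),
      ∀ z : EuclideanSpace ℂ (Fin k), MvPolynomial.eval (fun j => z j) p = L z + b := by
  have h1 : MvPolynomial.homogeneousComponent 1 p ∈
      Submodule.span ℂ (Set.range (MvPolynomial.X : Fin k → MvPolynomial (Fin k) ℂ)) := by
    rw [← MvPolynomial.homogeneousSubmodule_one_eq_span_X]
    exact MvPolynomial.homogeneousComponent_isHomogeneous 1 p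
  have h2 : ∃ (L : EuclideanSpace ℂ (Fin k) →ₗ[ℂ] ℂ), ∀ z : EuclideanSpace ℂ (Fin k),
      MvPolynomial.eval (fun j => z j) (MvPolynomial.homogeneousComponent 1 p) = L z := by
    generalize MvPolynomial.homogeneousComponent 1 p = q at h1
    induction h1 using Submodule.span_induction with
    | mem x hx =>
      obtain ⟨i, rfl⟩ := hx
      exact ⟨(EuclideanSpace.proj i : EuclideanSpace ℂ (Fin k) →L[ℂ] ℂ).toLinearMap,
        fun z => by simp⟩
    | zero => exact ⟨0, fun z => by simp⟩
    | add x y _ _ hx hy =>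
      obtain ⟨L, hL⟩ := hx
      obtain ⟨M, hM⟩ := hy
      exact ⟨L + M, fun z => by simp [hL, hM]⟩
    | smul a x _ hx =>
      obtain ⟨L, hL⟩ := hx
      exact ⟨a • L, fun z => by simp [hL, MvPolynomial.smul_eval]⟩
  obtain ⟨L, hL⟩ := h2
  refine ⟨L, MvPolynomial.coeff 0 p, fun z => ?_⟩
  have h3 : p = MvPolynomial.homogeneousComponent 1 p + MvPolynomial.C (MvPolynomial.coeff 0 p) := by
    rcases Nat.le_one_iff_eq_zero_or_eq_one.1 hp with h | h
    · rw [MvPolynomial.homogeneousComponent_eq_zero 1 p (by omega), zero_add]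
      exact MvPolynomial.totalDegree_eq_zero_iff_eq_C.1 h
    · have := MvPolynomial.sum_homogeneousComponent p
      rw [h, Finset.sum_range_succ, Finset.sum_range_one,
        MvPolynomial.homogeneousComponent_zero] at this
      rw [add_comm]
      exact this.symm
  rw [← hL z]
  conv_lhs => rw [h3]
  simp


/-- A polynomial self-map of `ℂ^k` with sub-quadratic logarithmic growth
`log⁺‖P(z)‖ ≤ α·log⁺‖z‖ + C`, `α < 2`, has all components of total degree at most `1`,
i.e. it is an affine map `z ↦ A z + b`. -/
theorem polynomial_map_subquadratic_growth_affine (k : ℕ) (hk : 1 ≤ k)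
    (P : EuclideanSpace ℂ (Fin k) → EuclideanSpace ℂ (Fin k))
    (p : Fin k → MvPolynomial (Fin k) ℂ)
    (hP : ∀ (z : EuclideanSpace ℂ (Fin k)) (i : Fin k),
      P z i = MvPolynomial.eval (fun j => z j) (p i))
    (C α : ℝ) (hC : 0 ≤ C) (hα : α < 2)
    (hbound : ∀ z : EuclideanSpace ℂ (Fin k),
      max (Real.log ‖P z‖) 0 ≤ α * max (Real.log ‖z‖) 0 + C) :
    (∀ i, (p i).totalDegree ≤ 1) ∧
    ∃ (A : EuclideanSpace ℂ (Fin k) →ₗ[ℂ] EuclideanSpace ℂ (Fin k))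
      (b : EuclideanSpace ℂ (Fin k)), ∀ z, P z = A z + b := by
  have hdeg : ∀ i, (p i).totalDegree ≤ 1 := by
    intro i
    by_contra! hd
    have hp0 : p i ≠ 0 := by
      rintro h
      simp [h] at hd
    obtain ⟨w, hw⟩ : ∃ w, MvPolynomial.eval w
        (MvPolynomial.homogeneousComponent (p i).totalDegree (p i)) ≠ 0 := by
      by_contra! h
      exact aux_top_ne _ hp0 (MvPolynomial.funext fun x => by simp [h x])
    set W : EuclideanSpace ℂ (Fin k) := WithLp.toLp 2 w with hW
    have hW0 : 0 < ‖W‖ := by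
      rw [norm_pos_iff]
      intro h0
      have hw0 : w = fun j => (0 : ℂ) * w j := by
        funext j
        have : W j = 0 := by rw [h0]; rfl
        simpa [hW] using this
      apply hw
      rw [hw0, aux_eval_smul (MvPolynomial.homogeneousComponent_isHomogeneous _ _),
        zero_pow (by omega), zero_mul]
    have hlim := (aux_tendsto (p i) w).norm
    have hzero : Tendsto (fun t : ℝ => (Real.exp C * ‖W‖ ^ α) * t ^ (-(2 - α))) atTop (𝓝 0) := by
      simpa using (tendsto_rpow_neg_atTop (show 0 < 2 - α by linarith)).const_mul
        (Real.exp C * ‖W‖ ^ α)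
    have hle : ∀ᶠ t : ℝ in atTop,
        ‖MvPolynomial.eval (fun j => (t : ℂ) * w j) (p i) / (t : ℂ) ^ (p i).totalDegree‖
          ≤ (Real.exp C * ‖W‖ ^ α) * t ^ (-(2 - α)) := by
      filter_upwards [eventually_ge_atTop 1, eventually_ge_atTop (1 / ‖W‖)] with t ht1 ht2
      have ht0 : 0 < t := by linarith
      have htW : 1 ≤ t * ‖W‖ := by rwa [div_le_iff₀ hW0] at ht2
      have hn : ‖(t : ℂ) • W‖ = t * ‖W‖ := by
        rw [norm_smul, Complex.norm_real, Real.norm_of_nonneg ht0.le]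
      have hb := hbound ((t : ℂ) • W)
      rw [hn, max_eq_left (Real.log_nonneg htW)] at hb
      have hPle : ‖P ((t : ℂ) • W)‖ ≤ Real.exp C * (t * ‖W‖) ^ α := by
        rcases (norm_nonneg (P ((t : ℂ) • W))).eq_or_lt with h | h
        · rw [← h]; positivity
        · rw [← Real.exp_log h, Real.rpow_def_of_pos (by linarith), ← Real.exp_add]
          apply Real.exp_le_exp.2
          have := (le_max_left _ _).trans hb
          linarith
      have hcomp : ‖MvPolynomial.eval (fun j => (t : ℂ) * w j) (p i)‖ ≤ ‖P ((t : ℂ) • W)‖ := by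
        have h1 := PiLp.norm_apply_le (P ((t : ℂ) • W)) i
        rw [hP] at h1
        simpa [hW] using h1
      rw [norm_div, norm_pow, Complex.norm_real, Real.norm_of_nonneg ht0.le]
      have hpow : t ^ 2 ≤ t ^ (p i).totalDegree := pow_le_pow_right₀ ht1 hd
      calc _ ≤ (Real.exp C * (t * ‖W‖) ^ α) / t ^ 2 := by
            gcongr
            exact hcomp.trans hPle
        _ = _ := by
            rw [Real.mul_rpow ht0.le hW0.le, neg_sub, Real.rpow_sub ht0]
            norm_cast
            ring
    have := le_of_tendsto_of_tendsto hlim hzero hle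
    exact hw (norm_le_zero_iff.1 this)
  refine ⟨hdeg, ?_⟩
  choose L b hLb using fun i => aux_affine (p i) (hdeg i)
  refine ⟨(WithLp.linearEquiv 2 ℂ (Fin k → ℂ)).symm.toLinearMap ∘ₗ LinearMap.pi L,
    WithLp.toLp 2 b, fun z => ?_⟩
  ext i
  rw [hP, hLb]
  simp
end

section
/- Let k ≥ 1 and let f, g : ℂ^k → ℂ^k be bijections such that f is a polynomial map (each component a multivariate polynomial) and the inverse g⁻¹ is a polynomial map of degree at most δ_g. Let d_f, d_g, δ_f, δ_g be real numbers > 1 with d_f ≤ d_g and δ_g < 2·δ_f. Suppose there exist functions G⁺, G⁻ : ℂ^k → [0,∞) and a constant C₁ ≥ 0 such that for all z ∈ ℂ^k: G⁺(f(z)) = d_f·G⁺(z), G⁺(g(z)) = d_g·G⁺(z), G⁻(f(z)) = δ_f⁻¹·G⁻(z), and |max(G⁺(z), G⁻(z)) − log⁺‖z‖| ≤ C₁. Then f∘g⁻¹ is an affine map (each of its components is a polynomial of total degree at most 1), and G⁺(f(g⁻¹(z))) = (d_f/d_g)·G⁺(z) for all z. -/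
lemma aux_eval_bound {k : ℕ} (p : MvPolynomial (Fin k) ℂ) (z : Fin k → ℂ) (M : ℝ) (hM : 1 ≤ M)
    (hz : ∀ j, ‖z j‖ ≤ M) :
    ‖MvPolynomial.eval z p‖ ≤ (∑ d ∈ p.support, ‖p.coeff d‖) * M ^ p.totalDegree := by
  rw [MvPolynomial.eval_eq', Finset.sum_mul]
  refine (norm_sum_le _ _).trans (Finset.sum_le_sum fun d hd => ?_)
  rw [norm_mul, norm_prod]
  refine mul_le_mul_of_nonneg_left ?_ (norm_nonneg _)
  calc ∏ i, ‖z i ^ d i‖ ≤ ∏ i, M ^ d i := by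
        refine Finset.prod_le_prod (fun _ _ => norm_nonneg _) fun i _ => ?_
        rw [norm_pow]
        exact pow_le_pow_left₀ (norm_nonneg _) (hz i) _
    _ = M ^ (∑ i, d i) := Finset.prod_pow_eq_pow_sum _ _ _
    _ ≤ M ^ p.totalDegree := by
        refine pow_le_pow_right₀ hM ?_
        have := MvPolynomial.le_totalDegree hd
        rwa [Finsupp.sum_fintype _ _ (by simp)] at this

lemma aux_hom_eval {k : ℕ} (p : MvPolynomial (Fin k) ℂ) (n : ℕ) (hp : p.IsHomogeneous n)
    (t : ℂ) (z : Fin k → ℂ) :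
    MvPolynomial.eval (fun j => t * z j) p = t ^ n * MvPolynomial.eval z p := by
  rw [MvPolynomial.eval_eq', MvPolynomial.eval_eq', Finset.mul_sum]
  refine Finset.sum_congr rfl fun d hd => ?_
  have h := hp.degree_eq_sum_deg_support hd
  have h2 : ∑ i, d i = n := by
    rw [h]
    refine (Finset.sum_subset (Finset.subset_univ _) fun i _ hi => ?_).symm
    simpa using hi
  simp only [mul_pow, Finset.prod_mul_distrib, Finset.prod_pow_eq_pow_sum, h2]
  ring

lemma aux_degree {k : ℕ} (p : MvPolynomial (Fin k) ℂ) (s K : ℝ) (hs0 : 0 ≤ s) (hs : s < 2)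
    (hK : 0 ≤ K)
    (h : ∀ z : EuclideanSpace ℂ (Fin k),
      ‖MvPolynomial.eval (fun j => z j) p‖ ≤ K * (max 1 ‖z‖) ^ s) :
    p.totalDegree ≤ 1 := by
  by_contra! hn
  set n := p.totalDegree with hndef
  have hne : MvPolynomial.homogeneousComponent n p ≠ 0 := by
    intro h0
    have hp0 : p ≠ 0 := by
      rintro rfl
      simp at hndef
      omega
    obtain ⟨d, hd, hdn⟩ := Finset.exists_mem_eq_sup p.support
      (MvPolynomial.support_nonempty.mpr hp0) (fun d => d.sum fun _ e => e)
    have := congrArg (MvPolynomial.coeff d) h0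
    rw [MvPolynomial.coeff_homogeneousComponent, if_pos] at this
    · exact (MvPolynomial.mem_support_iff.mp hd) (by simpa using this)
    · exact hdn.symm
  obtain ⟨z, hz⟩ : ∃ z : Fin k → ℂ,
      MvPolynomial.eval z (MvPolynomial.homogeneousComponent n p) ≠ 0 := by
    by_contra! hall
    exact hne (MvPolynomial.funext fun x => by simpa using hall x)
  set c : ℕ → ℂ := fun i => MvPolynomial.eval z (MvPolynomial.homogeneousComponent i p) with hc
  have hev : ∀ t : ℂ, MvPolynomial.eval (fun j => t * z j) p
      = ∑ i ∈ Finset.range (n + 1), t ^ i * c i := by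
    intro t
    conv_lhs => rw [← MvPolynomial.sum_homogeneousComponent p, map_sum]
    exact Finset.sum_congr rfl fun i _ =>
      aux_hom_eval _ _ (MvPolynomial.homogeneousComponent_isHomogeneous i p) t z
  set Z : EuclideanSpace ℂ (Fin k) := WithLp.toLp 2 z
  set L := K * (max 1 ‖Z‖) ^ s with hL
  let F : ℝ → ℂ := fun u => ∑ i ∈ Finset.range (n + 1), (u : ℂ) ^ (n - i) * c i
  have hFc : Continuous F := by fun_prop
  have hF0 : F 0 = c n := by
    simp only [F, Finset.sum_range_succ]
    rw [Finset.sum_eq_zero]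
    · simp
    · intro i hi
      have : n - i ≠ 0 := by have := Finset.mem_range.mp hi; omega
      simp [this]
  have hbd : ∀ u : ℝ, 0 < u → u ≤ 1 → ‖F u‖ ≤ L * u ^ ((n : ℝ) - s) := by
    intro u hu hu1
    have hFu : F u = (u : ℂ) ^ n * MvPolynomial.eval (fun j => (u : ℂ)⁻¹ * z j) p := by
      rw [hev, Finset.mul_sum]
      refine Finset.sum_congr rfl fun i hi => ?_
      have hi' : i ≤ n := by have := Finset.mem_range.mp hi; omega
      have huc : (u : ℂ) ≠ 0 := by exact_mod_cast hu.ne'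
      rw [pow_sub₀ _ huc hi', inv_pow]
      ring
    have h1 := h ((u : ℂ)⁻¹ • Z)
    have h2 : max 1 ‖(u : ℂ)⁻¹ • Z‖ ≤ u⁻¹ * max 1 ‖Z‖ := by
      have hui : 1 ≤ u⁻¹ := (one_le_inv₀ hu).mpr hu1
      rw [norm_smul, norm_inv, Complex.norm_real, Real.norm_of_nonneg hu.le]
      refine max_le ?_ ?_
      · nlinarith [le_max_left 1 ‖Z‖]
      · exact mul_le_mul_of_nonneg_left (le_max_right _ _) (by positivity)
    have h3 : ‖MvPolynomial.eval (fun j => (u : ℂ)⁻¹ * z j) p‖ ≤ K * (u⁻¹ * max 1 ‖Z‖) ^ s := by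
      refine le_trans (by simpa [Z] using h1) ?_
      exact mul_le_mul_of_nonneg_left
        (Real.rpow_le_rpow (by positivity) h2 hs0) hK
    rw [hFu, norm_mul, norm_pow, Complex.norm_real, Real.norm_of_nonneg hu.le,
      Real.rpow_sub hu, Real.rpow_natCast]
    refine (mul_le_mul_of_nonneg_left h3 (by positivity)).trans (le_of_eq ?_)
    rw [Real.mul_rpow (by positivity) (by positivity), Real.inv_rpow hu.le, hL]
    field_simp
  have hpos : 0 < (n : ℝ) - s := by
    have : (2 : ℝ) ≤ n := by exact_mod_cast hn
    linarith
  have hlim1 : Filter.Tendsto (fun u => ‖F u‖) (nhdsWithin 0 (Set.Ioi 0)) (nhds ‖c n‖) := by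
    rw [← hF0]
    exact (hFc.norm.tendsto 0).mono_left nhdsWithin_le_nhds
  have hlim2 : Filter.Tendsto (fun u : ℝ => L * u ^ ((n : ℝ) - s)) (nhdsWithin 0 (Set.Ioi 0))
      (nhds 0) := by
    have hcont : Continuous (fun u : ℝ => L * u ^ ((n : ℝ) - s)) :=
      continuous_const.mul (Real.continuous_rpow_const hpos.le)
    have := (hcont.tendsto 0).mono_left (nhdsWithin_le_nhds (s := Set.Ioi 0))
    simpa [Real.zero_rpow hpos.ne'] using this
  have hle : ‖c n‖ ≤ 0 := by
    refine le_of_tendsto_of_tendsto hlim1 hlim2 ?_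
    filter_upwards [Ioc_mem_nhdsGT (show (0 : ℝ) < 1 by norm_num)] with u hu
    exact hbd u hu.1 hu.2
  exact hz (norm_le_zero_iff.mp hle)

lemma aux_norm_le_sum {k : ℕ} (x : EuclideanSpace ℂ (Fin k)) : ‖x‖ ≤ ∑ i, ‖x i‖ := by
  rw [EuclideanSpace.norm_eq]
  refine Real.sqrt_le_iff.mpr ⟨Finset.sum_nonneg fun _ _ => norm_nonneg _, ?_⟩
  rw [sq, Finset.sum_mul]
  refine Finset.sum_le_sum fun i _ => ?_
  rw [sq]
  exact mul_le_mul_of_nonneg_left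
    (Finset.single_le_sum (f := fun j => ‖x j‖) (fun _ _ => norm_nonneg _) (Finset.mem_univ i))
    (norm_nonneg _)

lemma aux_logp (x : ℝ) (hx : 0 ≤ x) : max (Real.log x) 0 = Real.log (max 1 x) := by
  rcases le_total x 1 with h | h
  · rw [max_eq_left h, Real.log_one, max_eq_right (Real.log_nonpos hx h)]
  · rw [max_eq_right h, max_eq_left (Real.log_nonneg h)]

/-- Analytic core of Lemma 2.2: if `f` is a polynomial bijection, `g` a bijection
whose inverse is a polynomial map of degree at most `δ_g`, with `d_f ≤ d_g`, `δ_g < 2·δ_f`,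
and `G⁺`, `G⁻` are nonnegative functions satisfying the Green-function functional equations
and the growth bound `|max(G⁺,G⁻) − log⁺‖z‖| ≤ C₁`, then `f ∘ g⁻¹` is affine (each component
a polynomial of total degree at most 1) and `G⁺(f(g⁻¹(z))) = (d_f/d_g)·G⁺(z)`. -/
theorem comp_inverse_affine_preserves_green (k : ℕ) (hk : 1 ≤ k)
    (f : EuclideanSpace ℂ (Fin k) → EuclideanSpace ℂ (Fin k))
    (g : EuclideanSpace ℂ (Fin k) ≃ EuclideanSpace ℂ (Fin k))
    (hf : Function.Bijective f)
    (pf : Fin k → MvPolynomial (Fin k) ℂ)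
    (hpf : ∀ (z : EuclideanSpace ℂ (Fin k)) (i : Fin k),
      f z i = MvPolynomial.eval (fun j => z j) (pf i))
    (df dg δf δg : ℝ) (hdf : 1 < df) (hdg : 1 < dg) (hδf : 1 < δf) (hδg : 1 < δg)
    (pginv : Fin k → MvPolynomial (Fin k) ℂ)
    (hpginv : ∀ (z : EuclideanSpace ℂ (Fin k)) (i : Fin k),
      g.symm z i = MvPolynomial.eval (fun j => z j) (pginv i))
    (hdegginv : ∀ i, ((pginv i).totalDegree : ℝ) ≤ δg)
    (hle : df ≤ dg) (hlt : δg < 2 * δf)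
    (Gp Gm : EuclideanSpace ℂ (Fin k) → ℝ)
    (hGp0 : ∀ z, 0 ≤ Gp z) (hGm0 : ∀ z, 0 ≤ Gm z)
    (C₁ : ℝ) (hC₁ : 0 ≤ C₁)
    (hGpf : ∀ z, Gp (f z) = df * Gp z)
    (hGpg : ∀ z, Gp (g z) = dg * Gp z)
    (hGmf : ∀ z, Gm (f z) = δf⁻¹ * Gm z)
    (hgrowth : ∀ z : EuclideanSpace ℂ (Fin k),
      |max (Gp z) (Gm z) - max (Real.log ‖z‖) 0| ≤ C₁) :
    (∃ q : Fin k → MvPolynomial (Fin k) ℂ,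
      (∀ i, (q i).totalDegree ≤ 1) ∧
      ∀ (z : EuclideanSpace ℂ (Fin k)) (i : Fin k),
        f (g.symm z) i = MvPolynomial.eval (fun j => z j) (q i)) ∧
    ∀ z, Gp (f (g.symm z)) = (df / dg) * Gp z := by
  have hGpmain : ∀ z, Gp (f (g.symm z)) = (df / dg) * Gp z := by
    intro z
    have h1 := hGpg (g.symm z)
    rw [Equiv.apply_symm_apply] at h1
    have hdg0 : dg ≠ 0 := by linarith
    rw [hGpf, h1]
    field_simp
  refine ⟨?_, hGpmain⟩
  -- growth of `g⁻¹`
  set A : ℝ := 1 + ∑ i, ∑ d ∈ (pginv i).support, ‖(pginv i).coeff d‖ with hA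
  have hA1 : 1 ≤ A := by
    have : 0 ≤ ∑ i, ∑ d ∈ (pginv i).support, ‖(pginv i).coeff d‖ :=
      Finset.sum_nonneg fun _ _ => Finset.sum_nonneg fun _ _ => norm_nonneg _
    linarith
  have hginv : ∀ z, Real.log (max 1 ‖g.symm z‖) ≤ Real.log A + δg * Real.log (max 1 ‖z‖) := by
    intro z
    have hM : 1 ≤ max 1 ‖z‖ := le_max_left _ _
    have hM0 : 0 < max 1 ‖z‖ := by linarith
    have hMδ : 1 ≤ (max 1 ‖z‖) ^ δg := Real.one_le_rpow hM (by linarith)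
    have hb : ‖g.symm z‖ ≤ A * (max 1 ‖z‖) ^ δg := by
      calc ‖g.symm z‖ ≤ ∑ i, ‖g.symm z i‖ := aux_norm_le_sum _
        _ ≤ ∑ i, (∑ d ∈ (pginv i).support, ‖(pginv i).coeff d‖) * (max 1 ‖z‖) ^ δg := by
            refine Finset.sum_le_sum fun i _ => ?_
            rw [hpginv]
            refine (aux_eval_bound (pginv i) _ (max 1 ‖z‖) hM
              fun j => (PiLp.norm_apply_le z j).trans (le_max_right _ _)).trans ?_
            refine mul_le_mul_of_nonneg_left ?_ (Finset.sum_nonneg fun _ _ => norm_nonneg _)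
            rw [← Real.rpow_natCast]
            exact Real.rpow_le_rpow_of_exponent_le hM (hdegginv i)
        _ ≤ A * (max 1 ‖z‖) ^ δg := by
            rw [← Finset.sum_mul, hA]
            nlinarith
    have hb2 : max 1 ‖g.symm z‖ ≤ A * (max 1 ‖z‖) ^ δg := max_le (by nlinarith) hb
    refine (Real.log_le_log (by positivity) hb2).trans (le_of_eq ?_)
    rw [Real.log_mul (by linarith) (by linarith), Real.log_rpow hM0]
  have hlogA : 0 ≤ Real.log A := Real.log_nonneg hA1
  have hδf0 : 0 < δf := by linarith
  have hδi : 0 < δf⁻¹ := inv_pos.mpr hδf0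
  have hδi1 : δf⁻¹ ≤ 1 := inv_le_one_of_one_le₀ hδf.le
  set s : ℝ := max 1 (δg / δf) with hs
  have hs2 : s < 2 := max_lt (by norm_num) (by rw [div_lt_iff₀ hδf0]; exact hlt)
  have hs1 : 1 ≤ s := le_max_left _ _
  have hup : ∀ z, max (Gp z) (Gm z) ≤ Real.log (max 1 ‖z‖) + C₁ := fun z => by
    have := (abs_le.mp (hgrowth z)).2
    rw [aux_logp _ (norm_nonneg _)] at this
    linarith
  have hlow : ∀ z, Real.log (max 1 ‖z‖) ≤ max (Gp z) (Gm z) + C₁ := fun z => by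
    have := (abs_le.mp (hgrowth z)).1
    rw [aux_logp _ (norm_nonneg _)] at this
    linarith
  have hmain : ∀ z, Real.log (max 1 ‖f (g.symm z)‖)
      ≤ s * Real.log (max 1 ‖z‖) + (Real.log A + 2 * C₁) := by
    intro z
    have hl : 0 ≤ Real.log (max 1 ‖z‖) := Real.log_nonneg (le_max_left _ _)
    have h1 : Gp (f (g.symm z)) ≤ s * Real.log (max 1 ‖z‖) + (Real.log A + C₁) := by
      have hr : df / dg ≤ 1 := (div_le_one (by linarith)).mpr hle
      have h2 := (le_max_left _ _).trans (hup z)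
      rw [hGpmain]
      nlinarith [hGp0 z]
    have h2 : Gm (f (g.symm z)) ≤ s * Real.log (max 1 ‖z‖) + (Real.log A + C₁) := by
      have h3 := (le_max_right _ _).trans (hup (g.symm z))
      have h4 := hginv z
      have h5 : δg / δf ≤ s := le_max_right _ _
      rw [hGmf]
      calc δf⁻¹ * Gm (g.symm z)
          ≤ δf⁻¹ * (Real.log A + δg * Real.log (max 1 ‖z‖) + C₁) :=
            mul_le_mul_of_nonneg_left (by linarith) hδi.le
        _ = (δg / δf) * Real.log (max 1 ‖z‖) + δf⁻¹ * (Real.log A + C₁) := by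
            rw [div_eq_mul_inv]; ring
        _ ≤ _ := add_le_add (mul_le_mul_of_nonneg_right h5 hl)
            (mul_le_of_le_one_left (by linarith) hδi1)
    have := hlow (f (g.symm z))
    have := max_le h1 h2
    linarith
  have hnorm : ∀ z, ‖f (g.symm z)‖ ≤ Real.exp (Real.log A + 2 * C₁) * (max 1 ‖z‖) ^ s := by
    intro z
    have hM0 : 0 < max 1 ‖z‖ := lt_of_lt_of_le one_pos (le_max_left _ _)
    refine (le_max_right 1 _).trans ?_
    have hp : 0 < max 1 ‖f (g.symm z)‖ := lt_of_lt_of_le one_pos (le_max_left _ _)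
    rw [← Real.exp_log hp, Real.rpow_def_of_pos hM0, ← Real.exp_add]
    exact Real.exp_le_exp.mpr (by linarith [hmain z])
  have hq : ∀ (z : EuclideanSpace ℂ (Fin k)) (i : Fin k),
      f (g.symm z) i = MvPolynomial.eval (fun j => z j) (MvPolynomial.bind₁ pginv (pf i)) := by
    intro z i
    rw [hpf]
    simp only [MvPolynomial.eval]
    rw [MvPolynomial.eval₂Hom_bind₁]
    congr 2
    funext j
    exact hpginv z j
  refine ⟨fun i => MvPolynomial.bind₁ pginv (pf i), fun i => ?_, hq⟩
  refine aux_degree _ s (Real.exp (Real.log A + 2 * C₁)) (by linarith) hs2 (Real.exp_pos _).le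
    fun z => ?_
  rw [← hq]
  exact (PiLp.norm_apply_le _ i).trans (hnorm z)
end

section
/- Let k ≥ 1, let f : ℂ^k → ℂ^k be a bijection, let d > 1 be a real number, and suppose that for every z ∈ ℂ^k the limit G(z) := lim_{n→∞} d^{-n}·log⁺‖f^n(z)‖ exists. Let β be an affine automorphism of ℂ^k and let p ≥ 1 be an integer such that β⁻¹∘f^p∘β = f^p. Then G(β(z)) = G(z) for all z ∈ ℂ^k. -/
open Filter

theorem green_aux {E : Type*} [NormedAddCommGroup E] (f : E → E) (d : ℝ) (hd : 1 < d) (G : E → ℝ)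
    (hG : ∀ z, Tendsto (fun n : ℕ => (d ^ n)⁻¹ * max (Real.log ‖f^[n] z‖) 0)
      atTop (nhds (G z)))
    (p : ℕ) (hp : 1 ≤ p) (g : E → E) (hg : Function.Commute g (f^[p]))
    (M c : ℝ) (hM : ∀ w, ‖g w‖ ≤ M * ‖w‖ + c) (z : E) : G (g z) ≤ G z := by
  have hsub : Tendsto (fun n : ℕ => p * n) atTop atTop :=
    tendsto_id.const_mul_atTop' (by omega)
  have h1 := (hG (g z)).comp hsub
  have h2 := (hG z).comp hsub
  have h0 : Tendsto (fun n : ℕ => (d ^ n)⁻¹) atTop (nhds 0) :=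
    (tendsto_pow_atTop_atTop_of_one_lt hd).inv_tendsto_atTop
  set C : ℝ := Real.log 2 + Real.posLog M + Real.posLog c with hC
  have h3 := (h0.comp hsub).mul_const C
  have h4 := h2.add h3
  rw [zero_mul, add_zero] at h4
  refine le_of_tendsto_of_tendsto' h1 h4 fun n => ?_
  have hcomm : f^[p * n] (g z) = g (f^[p * n] z) := by
    rw [Function.iterate_mul]
    exact ((hg.iterate_right n).eq z).symm
  simp only [Function.comp]
  rw [hcomm, ← mul_add]
  refine mul_le_mul_of_nonneg_left ?_ (by positivity)
  have hb := Real.posLog_le_posLog (norm_nonneg _) (hM (f^[p * n] z))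
  have ha := Real.posLog_add (x := M * ‖f^[p * n] z‖) (y := c)
  have hm := Real.posLog_mul (x := M) (y := ‖f^[p * n] z‖)
  rw [max_comm, max_comm (Real.log ‖f^[p * n] z‖)]
  simp only [Real.posLog] at *
  linarith

/-- if `G(z) = lim d^{-n} log⁺‖f^n(z)‖` exists for every `z`, `β` is an affine
automorphism of `ℂ^k`, and `β⁻¹ ∘ f^p ∘ β = f^p` for some integer `p ≥ 1`, then
`G(β(z)) = G(z)` for all `z`. -/
theorem green_function_invariant_of_conjugating_iterate (k : ℕ) (hk : 1 ≤ k)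
    (f : EuclideanSpace ℂ (Fin k) → EuclideanSpace ℂ (Fin k))
    (hf : Function.Bijective f)
    (d : ℝ) (hd : 1 < d)
    (G : EuclideanSpace ℂ (Fin k) → ℝ)
    (hG : ∀ z, Tendsto (fun n : ℕ => (d ^ n)⁻¹ * max (Real.log ‖f^[n] z‖) 0)
      atTop (nhds (G z)))
    (β : EuclideanSpace ℂ (Fin k) ≃ EuclideanSpace ℂ (Fin k))
    (A : EuclideanSpace ℂ (Fin k) →ₗ[ℂ] EuclideanSpace ℂ (Fin k))
    (b : EuclideanSpace ℂ (Fin k))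
    (hβ : ∀ z, β z = A z + b)
    (p : ℕ) (hp : 1 ≤ p)
    (hconj : ⇑β.symm ∘ f^[p] ∘ ⇑β = f^[p]) :
    ∀ z, G (β z) = G z := by
  have hsemi : Function.Commute (⇑β) (f^[p]) := by
    intro x
    have := congrFun hconj x
    simp only [Function.comp] at this
    rw [← this, Equiv.apply_symm_apply]
  have hsemi' : Function.Commute (⇑β.symm) (f^[p]) := by
    intro x
    have := congrFun hconj (β.symm x)
    simpa only [Function.comp, Equiv.apply_symm_apply] using this
  have hbij : Function.Bijective A := by
    constructor
    · intro x y hxy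
      apply β.injective
      rw [hβ, hβ, hxy]
    · intro y
      obtain ⟨x, hx⟩ := β.surjective (y + b)
      refine ⟨x, ?_⟩
      rw [hβ] at hx
      exact add_right_cancel hx
  let B := (LinearEquiv.ofBijective A hbij).symm.toLinearMap
  have hB : ∀ y, β.symm y = B (y - b) := by
    intro y
    rw [Equiv.symm_apply_eq, hβ]
    have : A (B (y - b)) = y - b := (LinearEquiv.ofBijective A hbij).apply_symm_apply (y - b)
    rw [this, sub_add_cancel]
  have key1 := green_aux f d hd G hG p hp β hsemi ‖LinearMap.toContinuousLinearMap A‖ ‖b‖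
    (fun w => by
      rw [hβ]
      exact (norm_add_le _ _).trans
        (add_le_add ((LinearMap.toContinuousLinearMap A).le_opNorm w) le_rfl))
  have key2 := green_aux f d hd G hG p hp β.symm hsemi' ‖LinearMap.toContinuousLinearMap B‖ ‖B b‖
    (fun w => by
      rw [hB, map_sub]
      exact (norm_sub_le _ _).trans
        (add_le_add ((LinearMap.toContinuousLinearMap B).le_opNorm w) le_rfl))
  intro z
  refine le_antisymm (key1 z) ?_
  have := key2 (β z)
  rwa [Equiv.symm_apply_apply] at this
end

section
/- Let F : ℂ³ → ℂ³ be the map F(x,y,z) = (y + x², z + y², x), and for a ∈ ℂ let β_a : ℂ³ → ℂ³ be the linear map β_a(x,y,z) = (a x, a² y, a⁴ z). If a⁷ = 1, then F∘β_a = β_{a²}∘F; consequently, for every n ∈ ℕ one has F^n∘β_a∘F^{-n} = β_{a^{2^n}}, so in particular F^n∘β_a∘F^{-n} is a linear (hence affine) map for every n, i.e. β_a belongs to N = {β an affine automorphism of ℂ³ : for all n ∈ ℕ, F^n∘β∘F^{-n} is affine}. -/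
/-- The Hénon–Sibony map `F(x,y,z) = (y + x², z + y², x)` of `ℂ³`. -/
def henonSibonyF : ℂ × ℂ × ℂ → ℂ × ℂ × ℂ :=
  fun p => (p.2.1 + p.1 ^ 2, p.2.2 + p.2.1 ^ 2, p.1)

/-- The inverse map `F⁻¹(x,y,z) = (z, x − z², y − (x − z²)²)`. -/
def henonSibonyFinv : ℂ × ℂ × ℂ → ℂ × ℂ × ℂ :=
  fun p => (p.2.2, p.1 - p.2.2 ^ 2, p.2.1 - (p.1 - p.2.2 ^ 2) ^ 2)

/-- The linear map `β_a(x,y,z) = (a x, a² y, a⁴ z)`. -/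
def betaMap (a : ℂ) : ℂ × ℂ × ℂ → ℂ × ℂ × ℂ :=
  fun p => (a * p.1, a ^ 2 * p.2.1, a ^ 4 * p.2.2)

/-- An affine map of `ℂ³`: a map of the form `p ↦ A p + b`. -/
def IsAffine3 (β : ℂ × ℂ × ℂ → ℂ × ℂ × ℂ) : Prop :=
  ∃ (A : (ℂ × ℂ × ℂ) →ₗ[ℂ] ℂ × ℂ × ℂ) (b : ℂ × ℂ × ℂ), ∀ p, β p = A p + b

/-- The set `N = {β affine automorphism of ℂ³ : ∀ n, Fⁿ∘β∘F⁻ⁿ is affine}`. -/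
def NSet3 : Set (ℂ × ℂ × ℂ → ℂ × ℂ × ℂ) :=
  {β | Function.Bijective β ∧ ∀ n : ℕ, IsAffine3 (henonSibonyF^[n] ∘ β ∘ henonSibonyFinv^[n])}

/-- if `a⁷ = 1` then `F∘β_a = β_{a²}∘F`; consequently
`Fⁿ∘β_a∘F⁻ⁿ = β_{a^{2ⁿ}}` for all `n`, so each `Fⁿ∘β_a∘F⁻ⁿ` is linear (hence affine),
i.e. `β_a ∈ N`. -/
theorem betaMap_mem_NSet3 (a : ℂ) (ha : a ^ 7 = 1) :
    henonSibonyF ∘ betaMap a = betaMap (a ^ 2) ∘ henonSibonyF ∧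
    (∀ n : ℕ, henonSibonyF^[n] ∘ betaMap a ∘ henonSibonyFinv^[n] = betaMap (a ^ 2 ^ n)) ∧
    (∀ n : ℕ, ∃ A : (ℂ × ℂ × ℂ) →ₗ[ℂ] ℂ × ℂ × ℂ,
      ∀ p, (henonSibonyF^[n] ∘ betaMap a ∘ henonSibonyFinv^[n]) p = A p) ∧
    betaMap a ∈ NSet3 := by
  have key : ∀ c : ℂ, c ^ 7 = 1 →
      henonSibonyF ∘ betaMap c = betaMap (c ^ 2) ∘ henonSibonyF := by
    intro c hc
    funext p
    obtain ⟨x, y, z⟩ := p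
    simp only [Function.comp, henonSibonyF, betaMap, Prod.mk.injEq]
    refine ⟨by ring, by ring, ?_⟩
    linear_combination (-(c * x)) * hc
  have hinv : ∀ p, henonSibonyF (henonSibonyFinv p) = p := by
    rintro ⟨x, y, z⟩
    simp [henonSibonyF, henonSibonyFinv]
  have hpow : ∀ n : ℕ, (a ^ 2 ^ n) ^ 7 = 1 := by
    intro n
    rw [← pow_mul, mul_comm, pow_mul, ha, one_pow]
  have conj : ∀ n : ℕ,
      henonSibonyF^[n] ∘ betaMap a ∘ henonSibonyFinv^[n] = betaMap (a ^ 2 ^ n) := by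
    intro n
    induction n with
    | zero => simp
    | succ n ih =>
      funext p
      have h1 := congrFun ih (henonSibonyFinv p)
      have h2 := congrFun (key _ (hpow n)) (henonSibonyFinv p)
      simp only [Function.comp] at h1 h2
      simp only [Function.comp]
      rw [Function.iterate_succ_apply', Function.iterate_succ_apply, h1, h2, hinv,
        ← pow_mul, ← pow_succ]
  have lin : ∀ c : ℂ, ∃ A : (ℂ × ℂ × ℂ) →ₗ[ℂ] ℂ × ℂ × ℂ, ∀ p, betaMap c p = A p := by
    intro c
    refine ⟨{ toFun := betaMap c, map_add' := ?_, map_smul' := ?_ }, fun p => rfl⟩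
    · rintro ⟨x, y, z⟩ ⟨x', y', z'⟩
      simp [betaMap, mul_add]
    · rintro r ⟨x, y, z⟩
      simp [betaMap, mul_left_comm]
  refine ⟨key a ha, conj, ?_, ?_, ?_⟩
  · intro n
    rw [conj n]
    exact lin _
  · have hmul : ∀ c d : ℂ, c * d = 1 → ∀ p, betaMap c (betaMap d p) = p := by
      rintro c d h ⟨x, y, z⟩
      simp [betaMap, ← mul_assoc, ← mul_pow, h]
    have h1 : a ^ 6 * a = 1 := by rw [← ha]; ring
    have h2 : a * a ^ 6 = 1 := by rw [← ha]; ring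
    exact Function.bijective_iff_has_inverse.mpr ⟨betaMap (a ^ 6), hmul _ _ h1, hmul _ _ h2⟩
  · intro n
    rw [conj n]
    obtain ⟨A, hA⟩ := lin (a ^ 2 ^ n)
    exact ⟨A, 0, fun p => by rw [hA, add_zero]⟩
end

section
/- Let F : ℂ³ → ℂ³ be the map F(x,y,z) = (y + x², z + y², x), with inverse F⁻¹(x,y,z) = (z, x − z², y − (x − z²)²). Let a, b, c, d, e, x₀, y₀, z₀ ∈ ℂ and let β : ℂ³ → ℂ³ be the affine map β(x,y,z) = (a x + b y + x₀, c x + d y + y₀, e z + z₀). Assume that β is a bijection (equivalently (a d − b c)·e ≠ 0), and that both F∘β∘F⁻¹ and F²∘β∘F⁻² are affine maps. Then b = 0, c = 0, x₀ = y₀ = z₀ = 0, d = a², e = a⁴, and a⁷ = 1; that is, β(x,y,z) = (a x, a² y, a⁴ z) with a⁷ = 1. -/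
/-- An affine map satisfies `f p + f (-p) = 2 f 0`. -/
theorem IsAffine3.symm_sum {f : ℂ × ℂ × ℂ → ℂ × ℂ × ℂ} (hf : IsAffine3 f) (p : ℂ × ℂ × ℂ) :
    f p + f (-p) = f 0 + f 0 := by
  obtain ⟨A, b, h⟩ := hf
  rw [h, h, h, map_neg, map_zero]
  abel

/-- a block-triangular affine bijection
`β(x,y,z) = (a x + b y + x₀, c x + d y + y₀, e z + z₀)` such that both `F∘β∘F⁻¹` and
`F²∘β∘F⁻²` are affine must be of the form `β(x,y,z) = (a x, a² y, a⁴ z)` with `a⁷ = 1`. -/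
theorem NSet3_elements_are_diagonal (a b c d e x₀ y₀ z₀ : ℂ)
    (β : ℂ × ℂ × ℂ → ℂ × ℂ × ℂ)
    (hβ : ∀ p : ℂ × ℂ × ℂ,
      β p = (a * p.1 + b * p.2.1 + x₀, c * p.1 + d * p.2.1 + y₀, e * p.2.2 + z₀))
    (hbij : Function.Bijective β)
    (h1 : IsAffine3 (henonSibonyF ∘ β ∘ henonSibonyFinv))
    (h2 : IsAffine3 (henonSibonyF^[2] ∘ β ∘ henonSibonyFinv^[2])) :
    b = 0 ∧ c = 0 ∧ x₀ = 0 ∧ y₀ = 0 ∧ z₀ = 0 ∧ d = a ^ 2 ∧ e = a ^ 4 ∧ a ^ 7 = 1 := by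
  have k1 := fun x y z : ℂ => h1.symm_sum (x, y, z)
  have k2 := fun x y z : ℂ => h2.symm_sum (x, y, z)
  simp only [Function.comp, Function.iterate_succ, Function.iterate_zero, id, hβ, henonSibonyF,
    henonSibonyFinv, Prod.neg_mk, Prod.mk_add_mk, Prod.mk.injEq, Prod.fst_zero,
    Prod.snd_zero] at k1 k2
  have hb : b = 0 := by linear_combination (-1 / 2) * (k1 0 0 1).2.2
  subst hb
  have hd : d = a ^ 2 := by linear_combination (-1 / 2) * (k1 0 0 1).1
  have he : e = d ^ 2 := by
    linear_combination (-1 / 2) * (k1 1 0 0).2.1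
  have hd0 : d ≠ 0 := by
    intro h0
    have h := @hbij.1 (0, 0, 0) (0, 0, 1) (by simp [hβ, he, h0])
    simp at h
  have ha0 : a ≠ 0 := by
    rintro rfl
    exact hd0 (by simpa using hd)
  subst he
  have hc : c = 0 := by
    have : c * d = 0 := by
      linear_combination (1 / 4) * (k1 1 0 1).2.1 - (1 / 4) * (k1 0 0 1).2.1
    exact (mul_eq_zero.1 this).resolve_right hd0
  subst hc
  have hy : y₀ = 0 := by
    have : d * y₀ = 0 := by
      linear_combination (-1 / 4) * (k1 0 0 1).2.1
    exact (mul_eq_zero.1 this).resolve_left hd0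
  subst hy hd
  have hx : x₀ = 0 := by
    have : a * x₀ = 0 := by
      linear_combination (-1 / 4) * (k2 1 0 0).2.2
    exact (mul_eq_zero.1 this).resolve_left ha0
  subst hx
  have h8 : a * (a ^ 7 - 1) = 0 := by
    linear_combination (1 / 2) * (k2 1 0 0).2.1
  have hz : z₀ = 0 := by
    have : a ^ 4 * z₀ = 0 := by
      linear_combination (-1 / 4) * (k2 0 0 1).2.1 + (1 / 2) * h8
    exact (mul_eq_zero.1 this).resolve_left (pow_ne_zero 4 ha0)
  refine ⟨rfl, rfl, rfl, rfl, hz, rfl, by ring, ?_⟩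
  exact sub_eq_zero.1 ((mul_eq_zero.1 h8).resolve_left ha0)
end
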